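/- arXiv:1804.10164 — 4 statements merged into one kernel-verified Lean document; each statement's English description precedes it below -/
import Mathlib

section
/- Let O be a commutative ring, K its total ring of fractions, and I an O-submodule of K containing an element g that is a unit of K. Then the map Φ : Hom_O(I, O) → K defined by Φ(φ) = φ(g)·g^{-1} (which does not depend on the choice of the unit g ∈ I) is an injective O-module homomorphism whose image is exactly I* = {x ∈ K : x·h lies in the canonical image of O for every h ∈ I}. Consequently Φ induces an O-module isomorphism Hom_O(I, O) ≅ I*. -/
/-!
Let `f : I → K` be `R`-linear, where `K` is a localization of `R` and `I ⊆ K`. Clearing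
denominators gives `f h * g = f g * h` for all `g, h ∈ I`. When `g` is a unit, `f` is therefore
multiplication by `f g * g⁻¹`. So this element determines `f`, and it multiplies `I` into any
submodule of `K` containing the values of `f`; conversely, multiplication by `x` has
`(x * g) * g⁻¹ = x`.
-/

section

variable {R K : Type*} [CommSemiring R] [CommSemiring K] [Algebra R K] {I : Submodule R K}

lemma coe_smul_apply_comm {M : Type*} [AddCommMonoid M] [Module R M] [Module K M]
    [IsScalarTower R K M] (S : Submonoid R) [IsLocalization S K] (f : I →ₗ[R] M) (g h : I) :
    (g : K) • f h = (h : K) • f g := by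
  obtain ⟨a, b, s, hga, hhb⟩ := IsLocalization.surj₂ S K (g : K) (h : K)
  have numerator_smul_comm : a • h = b • g := by
    ext
    simp only [Submodule.coe_smul, Algebra.smul_def, ← hga, ← hhb]
    ring
  apply (IsLocalization.map_units K s).smul_left_cancel.mp
  calc
    algebraMap R K s • (g : K) • f h = a • f h := by
      rw [smul_smul, mul_comm, hga, algebraMap_smul]
    _ = b • f g := by rw [← map_smul, numerator_smul_comm, map_smul]
    _ = algebraMap R K s • (h : K) • f g := by
      rw [smul_smul, mul_comm, hhb, algebraMap_smul]

variable {N : Type*} [AddCommMonoid N] [Module R N]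

/-- The map `Φ : Hom_R(I, N) → K`, `φ ↦ j (φ g) * g⁻¹`, where `j : N → K` lets the values of `φ`
be read in `K`; the case of the theorem is `j = algebraMap R K`. The inverse is `Ring.inverse`,
so `Φ = 0` when `g` is not a unit. -/
noncomputable def evalDiv (j : N →ₗ[R] K) (g : I) : (I →ₗ[R] N) →ₗ[R] K :=
  LinearMap.mulRight R (Ring.inverse (g : K)) ∘ₗ j ∘ₗ LinearMap.applyₗ g

lemma evalDiv_apply (j : N →ₗ[R] K) (g : I) (φ : I →ₗ[R] N) :
    evalDiv j g φ = j (φ g) * Ring.inverse (g : K) :=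
  rfl

lemma evalDiv_mul_coe (S : Submonoid R) [IsLocalization S K] (j : N →ₗ[R] K) {g : I}
    (hg : IsUnit (g : K)) (φ : I →ₗ[R] N) (h : I) : evalDiv j g φ * h = j (φ h) :=
  calc
    evalDiv j g φ * h = Ring.inverse (g : K) * ((h : K) • (j ∘ₗ φ) g) := by
      rw [evalDiv_apply, smul_eq_mul, LinearMap.comp_apply]
      ring
    _ = Ring.inverse (g : K) * ((g : K) • (j ∘ₗ φ) h) := by
      rw [coe_smul_apply_comm S (j ∘ₗ φ) g h]
    _ = j (φ h) := by
      rw [smul_eq_mul, Ring.inverse_mul_cancel_left _ _ hg, LinearMap.comp_apply]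

lemma evalDiv_injective (S : Submonoid R) [IsLocalization S K] {j : N →ₗ[R] K}
    (hj : Function.Injective j) {g : I} (hg : IsUnit (g : K)) :
    Function.Injective (evalDiv j g) := by
  intro φ ψ hφψ
  ext h
  apply hj
  rw [← evalDiv_mul_coe S j hg φ, hφψ, evalDiv_mul_coe S j hg ψ]

lemma range_evalDiv_le (S : Submonoid R) [IsLocalization S K] (j : N →ₗ[R] K) {g : I}
    (hg : IsUnit (g : K)) : (evalDiv j g).range ≤ j.range / I := by
  rintro _ ⟨φ, rfl⟩
  rw [Submodule.mem_div_iff_forall_mul_mem]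
  exact fun h hh ↦ ⟨φ ⟨h, hh⟩, (evalDiv_mul_coe S j hg φ ⟨h, hh⟩).symm⟩

lemma le_range_evalDiv {j : N →ₗ[R] K} (hj : Function.Injective j) {g : I}
    (hg : IsUnit (g : K)) : j.range / I ≤ (evalDiv j g).range := by
  intro x hx
  rw [Submodule.mem_div_iff_forall_mul_mem] at hx
  let mulByX : I →ₗ[R] K := LinearMap.mulLeft R x ∘ₗ I.subtype
  have mulByX_mem_range (h : I) : mulByX h ∈ j.range := hx h h.2
  refine ⟨mulByX.codRestrictOfInjective j hj mulByX_mem_range, ?_⟩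
  rw [evalDiv_apply, LinearMap.codRestrictOfInjective_comp_apply]
  exact Ring.mul_inverse_cancel_right (g : K) x hg

theorem stmt_3_general (S : Submonoid R) [IsLocalization S K] {j : N →ₗ[R] K}
    (hj : Function.Injective j) {g : I} (hg : IsUnit (g : K)) :
    Function.Injective (evalDiv j g) ∧ (evalDiv j g).range = j.range / I :=
  ⟨evalDiv_injective S hj hg, (range_evalDiv_le S j hg).antisymm (le_range_evalDiv hj hg)⟩

end

/-- Let `O` be a commutative ring, `K` its total ring of fractions, and
`I` an `O`-submodule of `K` containing an element `g` that is a unit of `K`. Then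
`Φ : Hom_O(I,O) → K`, `Φ(φ) = φ(g)·g⁻¹`, is an injective `O`-module homomorphism whose
image is exactly `I* = {x ∈ K : x·I ⊆ O}`; hence `Hom_O(I,O) ≅ I*` as `O`-modules. -/
theorem stmt_3 {O : Type*} [CommRing O]
    (I : Submodule O (FractionRing O)) (g : FractionRing O) (hg : g ∈ I) (hgu : IsUnit g) :
    Function.Injective
      (fun φ : I →ₗ[O] O =>
        algebraMap O (FractionRing O) (φ ⟨g, hg⟩) * Ring.inverse g) ∧
    (∀ φ ψ : I →ₗ[O] O,
        algebraMap O (FractionRing O) ((φ + ψ) ⟨g, hg⟩) * Ring.inverse g =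
          algebraMap O (FractionRing O) (φ ⟨g, hg⟩) * Ring.inverse g +
            algebraMap O (FractionRing O) (ψ ⟨g, hg⟩) * Ring.inverse g) ∧
    (∀ (c : O) (φ : I →ₗ[O] O),
        algebraMap O (FractionRing O) ((c • φ) ⟨g, hg⟩) * Ring.inverse g =
          c • (algebraMap O (FractionRing O) (φ ⟨g, hg⟩) * Ring.inverse g)) ∧
    Set.range
      (fun φ : I →ₗ[O] O =>
        algebraMap O (FractionRing O) (φ ⟨g, hg⟩) * Ring.inverse g) =
      {x : FractionRing O | ∀ h ∈ I, x * h ∈ Set.range (algebraMap O (FractionRing O))} := by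
  let Φ := evalDiv (Algebra.linearMap O (FractionRing O)) (⟨g, hg⟩ : I)
  obtain ⟨hinj, hrange⟩ := stmt_3_general (nonZeroDivisors O)
    (j := Algebra.linearMap O (FractionRing O)) (IsFractionRing.injective O (FractionRing O))
    (g := (⟨g, hg⟩ : I)) hgu
  exact ⟨hinj, map_add Φ, map_smul Φ, congrArg SetLike.coe hrange⟩
end

section
/- Let S ⊆ ℕ^r be closed under addition, suppose c + ℕ^r ⊆ S for some c ∈ ℕ^r, and let α ∈ S with α_i ≥ 1 for all i. Define the Apéry set A_α = {β ∈ S : β − α ∉ S}. Then for every β ∈ ℤ^r: β ∉ S if and only if β = a − ρα for some a ∈ A_α and some integer ρ ≥ 1. -/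
/-- The fiber `F_J(E,α)` of `α` with respect to a subset `J` of indices. -/
def FJ {ι : Type*} (E : Set (ι → ℤ)) (J : Set ι) (α : ι → ℤ) : Set (ι → ℤ) :=
  {β ∈ E | (∀ j ∈ J, β j = α j) ∧ ∀ j ∉ J, α j < β j}

/-- The fiber `F(E,α) = ⋃ᵢ F_{{i}}(E,α)` of `α`. -/
def Fib {ι : Type*} (E : Set (ι → ℤ)) (α : ι → ℤ) : Set (ι → ℤ) :=
  ⋃ i : ι, FJ E {i} α

/-- The closed fiber `F̄_i(E,α)`. -/
def FibBar {ι : Type*} (E : Set (ι → ℤ)) (i : ι) (α : ι → ℤ) : Set (ι → ℤ) :=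
  {β ∈ E | β i = α i ∧ ∀ j ≠ i, α j ≤ β j}

/-- The Apéry set `A_α(E) = {β ∈ E : β - α ∉ E}`. -/
def Apery {ι : Type*} (E : Set (ι → ℤ)) (α : ι → ℤ) : Set (ι → ℤ) :=
  {β ∈ E | β - α ∉ E}

/-!
If `β ∉ S`, the conductor `c` forces `β + nα ∈ S` for large `n`, because every `α i` is positive.
The sequence `β, β + α, β + 2α, …` therefore enters `S`, and it does so at a point of the Apéry
set. Conversely, if `β = a - ρα` with `ρ ≥ 1` were in `S`, then so would be `a - α = β + (ρ - 1)α`,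
because `S` is stable under adding `α`.
-/

theorem add_nsmul_mem_of_forall_add_mem {M : Type*} [AddMonoid M] {S : Set M} {α β : M}
    (hS : ∀ γ ∈ S, γ + α ∈ S) (hβ : β ∈ S) (n : ℕ) : β + n • α ∈ S := by
  have hmaps : Set.MapsTo (· + α) S S := hS
  simpa only [add_right_iterate] using hmaps.iterate n hβ

theorem notMem_and_exists_add_nsmul_mem_iff {G : Type*} [AddGroup G] {S : Set G} {α β : G}
    (hS : ∀ γ ∈ S, γ + α ∈ S) :
    (β ∉ S ∧ ∃ n : ℕ, β + n • α ∈ S) ↔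
      ∃ a ∈ S, a - α ∉ S ∧ ∃ ρ : ℕ, 1 ≤ ρ ∧ β = a - ρ • α := by
  constructor
  · rintro ⟨hβ, hex⟩
    obtain ⟨n, hn, hn_succ⟩ : ∃ n : ℕ, β + n • α ∉ S ∧ β + (n + 1) • α ∈ S :=
      Nat.exists_not_and_succ_of_not_zero_of_exists (by simpa using hβ) hex
    have hpred : β + (n + 1) • α - α = β + n • α := by
      rw [succ_nsmul, ← add_assoc, add_sub_cancel_right]
    exact ⟨_, hn_succ, hpred ▸ hn, n + 1, n.succ_pos, (add_sub_cancel_right _ _).symm⟩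
  · rintro ⟨a, ha, ha_sub, ρ, hρ, rfl⟩
    obtain ⟨k, rfl⟩ := Nat.exists_eq_add_of_le' hρ
    have hlast : a - (k + 1) • α + k • α = a - α := by
      rw [succ_nsmul, sub_add_eq_sub_sub_swap, sub_add_cancel]
    refine ⟨fun hmem => ha_sub (hlast ▸ add_nsmul_mem_of_forall_add_mem hS hmem k), k + 1, ?_⟩
    rwa [sub_add_cancel]

theorem exists_le_add_nsmul {ι : Type*} [Finite ι] {R : ι → Type*} [∀ i, AddCommGroup (R i)]
    [∀ i, PartialOrder (R i)] [∀ i, IsOrderedAddMonoid (R i)] [∀ i, Archimedean (R i)]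
    {α : ∀ i, R i} (hα : ∀ i, 0 < α i) (c β : ∀ i, R i) : ∃ n : ℕ, c ≤ β + n • α := by
  choose m hm using fun i => Archimedean.arch (c i - β i) (hα i)
  obtain ⟨n, hn⟩ := Finite.exists_le m
  refine ⟨n, fun i => sub_le_iff_le_add'.mp ?_⟩
  exact (hm i).trans (nsmul_le_nsmul_left (hα i).le (hn i))

theorem stmt_7_general {ι : Type*} [Finite ι] {R : ι → Type*} [∀ i, AddCommGroup (R i)]
    [∀ i, PartialOrder (R i)] [∀ i, IsOrderedAddMonoid (R i)] [∀ i, Archimedean (R i)]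
    {S : Set (∀ i, R i)} {c α : ∀ i, R i} (hc : ∀ γ, c ≤ γ → γ ∈ S)
    (hS : ∀ γ ∈ S, γ + α ∈ S) (hα : ∀ i, 0 < α i) (β : ∀ i, R i) :
    β ∉ S ↔ ∃ a ∈ S, a - α ∉ S ∧ ∃ ρ : ℕ, 1 ≤ ρ ∧ β = a - ρ • α := by
  have hex : ∃ n : ℕ, β + n • α ∈ S := (exists_le_add_nsmul hα c β).imp fun _ hn => hc _ hn
  rw [← notMem_and_exists_add_nsmul_mem_iff hS, and_iff_left hex]

/-- Let `S ⊆ ℕ^r` be closed under addition with `c + ℕ^r ⊆ S`, and let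
`α ∈ S` with `α_i ≥ 1` for all `i`. With `A_α = {β ∈ S : β − α ∉ S}`, for every
`β ∈ ℤ^r`: `β ∉ S` iff `β = a − ρα` for some `a ∈ A_α` and some integer `ρ ≥ 1`. -/
theorem stmt_7 {r : ℕ} (S : Set (Fin r → ℤ))
    (hS0 : ∀ β ∈ S, ∀ i, 0 ≤ β i)
    (hSadd : ∀ a ∈ S, ∀ b ∈ S, a + b ∈ S)
    (c : Fin r → ℤ) (hc0 : ∀ i, 0 ≤ c i) (hc : ∀ β : Fin r → ℤ, c ≤ β → β ∈ S)
    (α : Fin r → ℤ) (hαS : α ∈ S) (hα1 : ∀ i, 1 ≤ α i) :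
    ∀ β : Fin r → ℤ,
      β ∉ S ↔ ∃ a ∈ Apery S α, ∃ ρ : ℕ, 1 ≤ ρ ∧ β = a - (ρ : ℤ) • α := by
  intro β
  simpa only [Apery, Set.mem_ofPred_eq, and_assoc, natCast_zsmul] using
    stmt_7_general hc (fun γ hγ => hSadd γ hγ α hαS) hα1 β
end

section
/- Let S ⊆ ℕ^r be closed under addition, let c ∈ ℕ^r with c + ℕ^r ⊆ S, set f = c − (1,…,1), and assume F(S, f) = ∅. Let α ∈ S with α_i ≥ 1 for all i, and let A_α = {β ∈ S : β − α ∉ S} be its Apéry set. Then the following are equivalent: (a) S is symmetric, i.e., for every γ ∈ ℕ^r one has γ ∈ S if and only if F(S, f − γ) = ∅; (b) for every a ∈ ℕ^r, if a ∈ A_α then F(S, f + α − a) ≠ ∅ and F(S, f + α − a) ⊆ A_α. -/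
/-!
Translation by `γ ∈ S` maps `F(S, f - γ)` into `F(S, f) = ∅`, so `F(S, f - γ) = ∅` for all
`γ ∈ S`, and an element of `F(S, f + α - a)` with `a ∈ S` leaves `S` when `α` is subtracted. Hence
one direction of symmetry and the inclusion in (b) always hold, and the theorem compares two
nonemptiness statements. The conductor makes `F(S, f - γ)` nonempty as soon as `γ` has a negative
coordinate, so symmetry applied to `γ = a - α ∉ S` gives the nonemptiness in (b). Conversely, for
`γ ∉ S`, the sequence `γ, γ + α, γ + 2α, …` reaches the conductor, hence enters `S`, at an Apéry
element `γ + (n + 1)α`; a point of `F(S, f - γ - nα)` translated by `nα` lies in `F(S, f - γ)`.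
-/

section Fib

variable {ι : Type*} {E : Set (ι → ℤ)} {α β γ δ : ι → ℤ}

theorem mem_Fib : β ∈ Fib E δ ↔ β ∈ E ∧ ∃ i, β i = δ i ∧ ∀ j ≠ i, δ j < β j := by
  simp only [Fib, FJ, Set.mem_iUnion, Set.mem_ofPred_eq, Set.mem_singleton_iff, forall_eq,
    exists_and_left, ne_eq]

theorem mem_of_mem_Fib (hβ : β ∈ Fib E δ) : β ∈ E :=
  (mem_Fib.1 hβ).1

theorem add_mem_Fib_add (hβ : β ∈ Fib E δ) (hγ : β + γ ∈ E) : β + γ ∈ Fib E (δ + γ) := by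
  obtain ⟨-, i, hi, hlt⟩ := mem_Fib.1 hβ
  exact mem_Fib.2 ⟨hγ, i, by simp [hi], fun j hj => by simpa using hlt j hj⟩

theorem sub_mem_Fib_sub (hβ : β ∈ Fib E δ) (hγ : β - γ ∈ E) : β - γ ∈ Fib E (δ - γ) := by
  rw [sub_eq_add_neg] at hγ
  simpa only [← sub_eq_add_neg] using add_mem_Fib_add hβ hγ

theorem Fib_sub_eq_empty (hadd : ∀ a ∈ E, ∀ b ∈ E, a + b ∈ E) (hδ : Fib E δ = ∅) (hγ : γ ∈ E) :
    Fib E (δ - γ) = ∅ := by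
  refine Set.eq_empty_of_forall_notMem fun β hβ => ?_
  have hβγ := add_mem_Fib_add hβ (hadd β (mem_of_mem_Fib hβ) γ hγ)
  rwa [sub_add_cancel, hδ] at hβγ

theorem Fib_add_sub_subset_Apery (hadd : ∀ a ∈ E, ∀ b ∈ E, a + b ∈ E) (hδ : Fib E δ = ∅)
    (hγ : γ ∈ E) : Fib E (δ + α - γ) ⊆ Apery E α := by
  refine fun β hβ => ⟨mem_of_mem_Fib hβ, fun hβα => ?_⟩
  have hmem := sub_mem_Fib_sub hβ hβα
  rwa [sub_right_comm, add_sub_cancel_right, Fib_sub_eq_empty hadd hδ hγ] at hmem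

end Fib

section Conductor

variable {ι : Type*} {E : Set (ι → ℤ)} {c γ δ : ι → ℤ}

theorem Fib_nonempty_of_le (hc : ∀ β : ι → ℤ, c ≤ β → β ∈ E) {i : ι} (hi : c i ≤ δ i) :
    (Fib E δ).Nonempty := by
  classical
  refine ⟨Function.update (c ⊔ (δ + 1)) i (δ i), mem_Fib.2 ⟨hc _ ?_, i, by simp, fun j hj => ?_⟩⟩
  · exact le_update_iff.2 ⟨hi, fun j _ => le_sup_left⟩
  · rw [Function.update_of_ne hj]
    exact Int.lt_of_add_one_le (le_sup_right (a := c j))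

theorem nonneg_of_Fib_sub_eq_empty (hc : ∀ β : ι → ℤ, c ≤ β → β ∈ E)
    (hγ : Fib E (c - 1 - γ) = ∅) : 0 ≤ γ := by
  refine fun i => le_of_not_gt fun hi : γ i < 0 => ?_
  have hle : c i ≤ (c - 1 - γ) i := by
    simp only [Pi.sub_apply, Pi.one_apply]
    lia
  exact (Fib_nonempty_of_le hc hle).ne_empty hγ

theorem nonneg_of_mem (hadd : ∀ a ∈ E, ∀ b ∈ E, a + b ∈ E) (hc : ∀ β : ι → ℤ, c ≤ β → β ∈ E)
    (hf : Fib E (c - 1) = ∅) (hγ : γ ∈ E) : 0 ≤ γ :=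
  nonneg_of_Fib_sub_eq_empty hc (Fib_sub_eq_empty hadd hf hγ)

end Conductor

theorem Fib_sub_nonempty_of_forall_mem_Apery {ι : Type*} {E : Set (ι → ℤ)} {α δ : ι → ℤ}
    (hadd : ∀ a ∈ E, ∀ b ∈ E, a + b ∈ E) (hα : α ∈ E)
    (hApery : ∀ a ∈ Apery E α, (Fib E (δ + α - a)).Nonempty) (k : ℕ) {γ : ι → ℤ} (hγ : γ ∉ E)
    (hk : γ + k • α ∈ E) : (Fib E (δ - γ)).Nonempty := by
  induction k generalizing γ with
  | zero => exact absurd (by simpa using hk) hγ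
  | succ k ih =>
    by_cases hγα : γ + α ∈ E
    · have hmem : γ + α ∈ Apery E α := ⟨hγα, by rwa [add_sub_cancel_right]⟩
      simpa only [add_sub_add_right_eq_sub] using hApery _ hmem
    · obtain ⟨β, hβ⟩ := ih hγα (by rwa [add_assoc, ← succ_nsmul'])
      have hβα := add_mem_Fib_add hβ (hadd β (mem_of_mem_Fib hβ) α hα)
      rw [← sub_sub, sub_add_cancel] at hβα
      exact ⟨β + α, hβα⟩

theorem exists_le_nsmul_of_forall_pos {ι M : Type*} [Finite ι] [AddCommMonoid M] [PartialOrder M]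
    [IsOrderedAddMonoid M] [Archimedean M] (x : ι → M) {y : ι → M} (hy : ∀ i, 0 < y i) :
    ∃ k : ℕ, x ≤ k • y := by
  choose m hm using fun i => Archimedean.arch (x i) (hy i)
  obtain ⟨k, hk⟩ := Finite.exists_le m
  exact ⟨k, fun i => (hm i).trans (nsmul_le_nsmul_left (hy i).le (hk i))⟩

theorem stmt_8_general {ι : Type*} (S : Set (ι → ℤ))
    (hSadd : ∀ a ∈ S, ∀ b ∈ S, a + b ∈ S)
    (c : ι → ℤ) (hc : ∀ β : ι → ℤ, c ≤ β → β ∈ S)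
    (f : ι → ℤ) (hf : f = c - 1) (hFf : Fib S f = ∅)
    (α : ι → ℤ) (hαS : α ∈ S) (hcα : ∃ k : ℕ, c ≤ k • α) :
    (∀ γ : ι → ℤ, (∀ i, 0 ≤ γ i) → (γ ∈ S ↔ Fib S (f - γ) = ∅)) ↔
      (∀ a : ι → ℤ, (∀ i, 0 ≤ a i) → a ∈ Apery S α →
        (Fib S (f + α - a)).Nonempty ∧ Fib S (f + α - a) ⊆ Apery S α) := by
  subst hf
  constructor
  · rintro hsymm a - ⟨haS, haα⟩
    refine ⟨Set.nonempty_iff_ne_empty.2 fun hempty => haα ?_,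
      Fib_add_sub_subset_Apery hSadd hFf haS⟩
    rw [← sub_sub_eq_add_sub] at hempty
    exact (hsymm _ (nonneg_of_Fib_sub_eq_empty hc hempty)).2 hempty
  · intro hApery γ hγ
    refine ⟨Fib_sub_eq_empty hSadd hFf, fun hempty => by_contra fun hγS => ?_⟩
    obtain ⟨k, hk⟩ := hcα
    have hγk : γ + k • α ∈ S := hc _ (le_add_of_nonneg_of_le hγ hk)
    have hnonempty : (Fib S (c - 1 - γ)).Nonempty :=
      Fib_sub_nonempty_of_forall_mem_Apery hSadd hαS
        (fun a ha => (hApery a (nonneg_of_mem hSadd hc hFf ha.1) ha).1) k hγS hγk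
    exact hnonempty.ne_empty hempty

/-- Let `S ⊆ ℕ^r` be closed under addition, `c + ℕ^r ⊆ S`,
`f = c − (1,…,1)`, and assume `F(S,f) = ∅`. Let `α ∈ S` with `α_i ≥ 1` and Apéry set
`A_α`. Then `S` is symmetric iff for every `a ∈ ℕ^r` with `a ∈ A_α` one has
`F(S, f + α − a) ≠ ∅` and `F(S, f + α − a) ⊆ A_α`. -/
theorem stmt_8 {r : ℕ} (S : Set (Fin r → ℤ))
    (hS0 : ∀ β ∈ S, ∀ i, 0 ≤ β i)
    (hSadd : ∀ a ∈ S, ∀ b ∈ S, a + b ∈ S)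
    (c : Fin r → ℤ) (hc0 : ∀ i, 0 ≤ c i) (hc : ∀ β : Fin r → ℤ, c ≤ β → β ∈ S)
    (f : Fin r → ℤ) (hf : f = c - 1) (hFf : Fib S f = ∅)
    (α : Fin r → ℤ) (hαS : α ∈ S) (hα1 : ∀ i, 1 ≤ α i) :
    (∀ γ : Fin r → ℤ, (∀ i, 0 ≤ γ i) → (γ ∈ S ↔ Fib S (f - γ) = ∅)) ↔
      (∀ a : Fin r → ℤ, (∀ i, 0 ≤ a i) → a ∈ Apery S α →
        (Fib S (f + α - a)).Nonempty ∧ Fib S (f + α - a) ⊆ Apery S α) :=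
  stmt_8_general S hSadd c hc f hf hFf α hαS (exists_le_nsmul_of_forall_pos c hα1)
end

section
/- Let r ≥ 2 and let E ⊆ ℤ^r have a minimum element α⁰ ∈ E (i.e., α⁰ ≤ β componentwise for all β ∈ E). Let α ∈ ℤ^r with α_r = α⁰_r, and let i ∈ {1,…,r−1}. Then F̄_i(E, α) ≠ ∅ if and only if F̄_i(pr_{I′}(E), pr_{I′}(α)) ≠ ∅, where I′ = {1,…,r−1} and pr_{I′} : ℤ^r → ℤ^{r−1} is the projection onto the first r−1 coordinates (the fiber F̄_i in ℤ^{r−1} being defined analogously). -/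
section

variable {ι κ : Type*} {E : Set (ι → ℤ)} {α : ι → ℤ}

theorem mem_fibBar_iff_le {i : ι} {β : ι → ℤ} :
    β ∈ FibBar E i α ↔ β ∈ E ∧ β i = α i ∧ α ≤ β := by
  refine and_congr_right fun _ => and_congr_right fun hi => ⟨fun h j => ?_, fun h j _ => h j⟩
  obtain rfl | hj := eq_or_ne j i
  · exact hi.ge
  · exact h j hj

/-- If `f` is the inclusion of `I'`, then `(· ∘ f)` is the projection `pr_{I'}`. -/
theorem fibBar_image_comp (f : κ → ι) (hE : ∀ β ∈ E, ∀ j ∉ Set.range f, α j ≤ β j) (i : κ) :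
    FibBar ((· ∘ f) '' E) i (α ∘ f) = (· ∘ f) '' FibBar E (f i) α := by
  ext γ
  constructor
  · intro hγ
    obtain ⟨⟨β, hβE, rfl⟩, hi, hle⟩ := mem_fibBar_iff_le.mp hγ
    refine ⟨β, mem_fibBar_iff_le.mpr ⟨hβE, hi, fun j => ?_⟩, rfl⟩
    by_cases hj : j ∈ Set.range f
    · obtain ⟨k, rfl⟩ := hj
      exact hle k
    · exact hE β hβE j hj
  · rintro ⟨β, hβ, rfl⟩
    obtain ⟨hβE, hi, hle⟩ := mem_fibBar_iff_le.mp hβ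
    exact mem_fibBar_iff_le.mpr ⟨⟨β, hβE, rfl⟩, hi, fun k => hle (f k)⟩

theorem stmt_12_general (f : κ → ι) (hE : ∀ β ∈ E, ∀ j ∉ Set.range f, α j ≤ β j) (i : κ) :
    (FibBar E (f i) α).Nonempty ↔ (FibBar ((· ∘ f) '' E) i (α ∘ f)).Nonempty := by
  rw [fibBar_image_comp f hE, Set.image_nonempty]

end

theorem eq_last_of_notMem_range_castLE {r : ℕ} {j : Fin r}
    (hj : j ∉ Set.range (Fin.castLE (Nat.sub_le r 1))) :
    j = ⟨r - 1, Nat.sub_one_lt_of_lt j.isLt⟩ := by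
  have hle : r - 1 ≤ j := by simpa only [Fin.range_castLE, Set.mem_ofPred_eq, not_lt] using hj
  exact Fin.ext (le_antisymm (Nat.le_sub_one_of_lt j.isLt) hle)

/-- Let `r ≥ 2` and let `E ⊆ ℤ^r` have a minimum element `α⁰ ∈ E`.
Let `α ∈ ℤ^r` with `α_r = α⁰_r` and `i ∈ {1,…,r−1}`. Then `F̄_i(E,α) ≠ ∅` iff
`F̄_i(pr_{I'}(E), pr_{I'}(α)) ≠ ∅`, where `I' = {1,…,r−1}`. -/
theorem stmt_12 {r : ℕ} (hr : 2 ≤ r) (E : Set (Fin r → ℤ))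
    (α0 : Fin r → ℤ) (hα0E : α0 ∈ E) (hα0min : ∀ β ∈ E, α0 ≤ β)
    (α : Fin r → ℤ)
    (hlast : α ⟨r - 1, by omega⟩ = α0 ⟨r - 1, by omega⟩)
    (i : Fin (r - 1)) :
    (FibBar E (Fin.castLE (Nat.sub_le r 1) i) α).Nonempty ↔
      (FibBar
          ((fun β : Fin r → ℤ => fun j : Fin (r - 1) => β (Fin.castLE (Nat.sub_le r 1) j)) '' E)
          i (fun j : Fin (r - 1) => α (Fin.castLE (Nat.sub_le r 1) j))).Nonempty := by
  refine stmt_12_general (Fin.castLE (Nat.sub_le r 1)) (fun β hβ j hj => ?_) i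
  exact eq_last_of_notMem_range_castLE hj ▸ hlast.trans_le (hα0min β hβ _)
end
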